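/- arXiv:1912.08951 — 2 statements merged into one kernel-verified Lean document; each statement's English description precedes it below -/
import Mathlib

section
/- Let b, c, m ∈ ℕ, ε > 0, and α, β ∈ (0,1). If there exists an ε-differentially private algorithm A : ({0,1}^c × {0,1}^b × {0,1}^2)^m → PMF(functions {0,1}^c × {0,1}^b → {0,1}^2) that is an (α,β)-PAC learner for the concatenated class C_{b,c} with sample complexity m, then there exists an ε-differentially private algorithm that is an (α,β)-PAC learner for Threshold_b with sample complexity m. -/
open scoped ENNReal

/-- Two databases of size `m` are neighboring if they differ in at most one entry. -/
def Neighbor {X : Type*} {m : ℕ} (x x' : Fin m → X) : Prop :=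
  ∃ i : Fin m, ∀ j : Fin m, j ≠ i → x j = x' j

/-- The probability that a sample from `P` lands in the set `T`. -/
noncomputable def prOf {Y : Type*} (P : PMF Y) (T : Set Y) : ℝ≥0∞ :=
  P.toOuterMeasure T

/-- `ε`-differential privacy for a mechanism operating on databases of size `m`. -/
def DPAlg {X Y : Type*} {m : ℕ} (ε : ℝ) (A : (Fin m → X) → PMF Y) : Prop :=
  ∀ x x' : Fin m → X, Neighbor x x' → ∀ T : Set Y,
    prOf (A x) T ≤ ENNReal.ofReal (Real.exp ε) * prOf (A x') T

/-- `ε`-differential privacy for a local randomizer. -/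
def DPRand {X Y : Type*} (ε : ℝ) (R : X → PMF Y) : Prop :=
  ∀ x x' : X, ∀ T : Set Y,
    prOf (R x) T ≤ ENNReal.ofReal (Real.exp ε) * prOf (R x') T

/-- `m` i.i.d. samples from the distribution `D`. -/
noncomputable def iid {Z : Type*} (D : PMF Z) : (m : ℕ) → PMF (Fin m → Z)
  | 0 => PMF.pure (fun i => i.elim0)
  | m + 1 => (iid D m).bind fun f => D.bind fun z => PMF.pure (Fin.cons z f)

/-- Independent product of finitely many PMFs. -/
noncomputable def pmfPi : (n : ℕ) → {T : Fin n → Type} → (∀ i, PMF (T i)) → PMF (∀ i, T i)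
  | 0, _, _ => PMF.pure (fun i => i.elim0)
  | n + 1, T, P =>
      (P 0).bind fun t0 =>
        (@pmfPi n (fun i => T i.succ) (fun i => P i.succ)).bind fun ts =>
          PMF.pure (Fin.cons t0 ts)

/-- XOR of a finite family of bits. -/
def xorFold {I : Type*} [Fintype I] (f : I → Bool) : Bool :=
  decide ((Finset.univ.filter (fun i => f i = true)).card % 2 = 1)

/-- The parity function `Par_k(x) = ⊕ k_i x_i`. -/
def Par {c : ℕ} (k x : Fin c → Bool) : Bool := xorFold (fun i => k i && x i)

/-- Interpret a bit string as an integer in `{0, …, 2^b − 1}`. -/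
def bitsToNat {b : ℕ} (y : Fin b → Bool) : ℕ :=
  ∑ i : Fin b, if y i then 2 ^ (i : ℕ) else 0

/-- The threshold function `Thr_t(y) = 1` iff `y ≥ t`. -/
def Thr {b : ℕ} (t y : Fin b → Bool) : Bool := decide (bitsToNat t ≤ bitsToNat y)

/-- Generalization error of hypothesis `h` w.r.t. target `c` under distribution `D`. -/
noncomputable def errD {Z L : Type*} (D : PMF Z) (c h : Z → L) : ℝ≥0∞ :=
  prOf D {z | h z ≠ c z}

/-- `(α, β)`-PAC learning for the concept class `C` with sample complexity `m`:
for every concept in `C` and distribution `D` on the domain, when the `m` examples are drawn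
i.i.d. from `D` and labeled by the concept, with probability at least `1 − β` the output
hypothesis has generalization error at most `α`. -/
def PACLearner {Z L : Type*} {m : ℕ} (α β : ℝ) (C : Set (Z → L))
    (A : (Fin m → Z × L) → PMF (Z → L)) : Prop :=
  ∀ c ∈ C, ∀ D : PMF Z,
    ENNReal.ofReal (1 - β) ≤
      prOf ((iid D m).bind fun s => A (fun i => (s i, c (s i))))
        {h | errD D c h ≤ ENNReal.ofReal α}

/-- The concatenated class `C_{b,c}` of functions `c_{k,t}(x,y) = (Par_k(x), Thr_t(y))`. -/
def ConcatClass (b c : ℕ) : Set ((Fin c → Bool) × (Fin b → Bool) → Bool × Bool) :=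
  {f | ∃ (k : Fin c → Bool) (t : Fin b → Bool), f = fun p => (Par k p.1, Thr t p.2)}

/-- The class `Threshold_b` of threshold functions. -/
def ThresholdClass (b : ℕ) : Set ((Fin b → Bool) → Bool) :=
  {f | ∃ t : Fin b → Bool, f = fun y => Thr t y}

/-!
Under the embedding `y ↦ (0, y)` every parity vanishes, so an example of a threshold function `f`
becomes an example of a concatenated concept once its label `v` is replaced by `(0, v)`. A
threshold learner can thus run `A` on the recoded examples and keep the second label bit of the
output hypothesis along the embedding. Recoding entry by entry and post-processing preserve
privacy; the recoded sample is i.i.d. from the pushforward distribution, so the guarantee of `A`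
applies, and dropping a label bit can only decrease the error.
-/

section Probability

variable {Y Y' Z Z' L L' : Type*}

theorem prOf_mono (P : PMF Y) {S T : Set Y} (h : S ⊆ T) : prOf P S ≤ prOf P T :=
  P.toOuterMeasure.mono h

theorem prOf_map (P : PMF Y) (p : Y → Y') (T : Set Y') :
    prOf (P.map p) T = prOf P (p ⁻¹' T) :=
  PMF.toOuterMeasure_map_apply p P T

theorem iid_map (D : PMF Z) (g : Z → Z') (m : ℕ) :
    iid (D.map g) m = (iid D m).map (g ∘ ·) := by
  induction m with
  | zero => exact (congrArg PMF.pure (Subsingleton.elim _ _)).trans (PMF.pure_map _ _).symm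
  | succ m ih =>
    simp only [iid, ih, PMF.bind_map, PMF.map_bind, PMF.pure_map, Fin.comp_cons]
    rfl

theorem errD_map (D : PMF Z) (g : Z → Z') (f h : Z' → L) :
    errD (D.map g) f h = errD D (f ∘ g) (h ∘ g) :=
  prOf_map D g _

theorem errD_comp_le (D : PMF Z) (q : L → L') (f h : Z → L) :
    errD D (q ∘ f) (q ∘ h) ≤ errD D f h :=
  prOf_mono D fun _ hne heq => hne (congrArg q heq)

end Probability

section Privacy

variable {X X' Y Y' : Type*} {m : ℕ} {ε : ℝ} {A : (Fin m → X) → PMF Y}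

theorem Neighbor.comp_left {x x' : Fin m → X} (hx : Neighbor x x') (e : X → X') :
    Neighbor (e ∘ x) (e ∘ x') :=
  hx.imp fun _ hi j hj => congrArg e (hi j hj)

theorem DPAlg.comap (hA : DPAlg ε A) (e : X' → X) : DPAlg ε fun x => A (e ∘ x) :=
  fun _ _ hx => hA _ _ (hx.comp_left e)

theorem DPAlg.map (hA : DPAlg ε A) (p : Y → Y') : DPAlg ε fun x => (A x).map p := by
  intro x x' hx T
  simpa only [prOf_map] using hA x x' hx (p ⁻¹' T)

end Privacy

section Transfer

variable {Z Z' L L' : Type*} {m : ℕ}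

/-- The reduction between learning problems: encode the points of the sample by `g` and its labels
by `l`, run `A`, then pull the output hypothesis back along `g` and decode its labels by `q`. -/
noncomputable def transferLearner (A : (Fin m → Z × L) → PMF (Z → L))
    (g : Z' → Z) (l : L' → L) (q : L → L') (s : Fin m → Z' × L') : PMF (Z' → L') :=
  (A (Prod.map g l ∘ s)).map (q ∘ · ∘ g)

variable {A : (Fin m → Z × L) → PMF (Z → L)}

theorem DPAlg.transferLearner {ε : ℝ} (hA : DPAlg ε A) (g : Z' → Z) (l : L' → L) (q : L → L') :
    DPAlg ε (transferLearner A g l q) :=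
  (hA.comap (Prod.map g l)).map (q ∘ · ∘ g)

theorem iid_bind_transferLearner (D : PMF Z') {g : Z' → Z} {l : L' → L} (q : L → L')
    {f : Z → L} {f' : Z' → L'} (hf : f ∘ g = l ∘ f') :
    ((iid D m).bind fun s => transferLearner A g l q fun i => (s i, f' (s i))) =
      ((iid (D.map g) m).bind fun s => A fun i => (s i, f (s i))).map (q ∘ · ∘ g) := by
  have hlabel (z : Z') : l (f' z) = f (g z) := (congrFun hf z).symm
  simp only [transferLearner, iid_map, PMF.bind_map, PMF.map_bind, Function.comp_def, Prod.map,
    hlabel]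

theorem PACLearner.transferLearner {α β : ℝ} {C : Set (Z → L)} {C' : Set (Z' → L')}
    (hA : PACLearner α β C A) {g : Z' → Z} {l : L' → L} {q : L → L'}
    (hq : Function.LeftInverse q l) (hC : ∀ f' ∈ C', ∃ f ∈ C, f ∘ g = l ∘ f') :
    PACLearner α β C' (transferLearner A g l q) := by
  intro f' hf' D
  obtain ⟨f, hfC, hf⟩ := hC f' hf'
  have hdecode : q ∘ f ∘ g = f' := by rw [hf, ← Function.comp_assoc, hq.id, Function.id_comp]
  have herr (h : Z → L) : errD D f' (q ∘ h ∘ g) ≤ errD (D.map g) f h := by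
    rw [← hdecode, errD_map]
    exact errD_comp_le D q (f ∘ g) (h ∘ g)
  rw [iid_bind_transferLearner D q hf, prOf_map]
  exact (hA f hfC (D.map g)).trans (prOf_mono _ fun h hh => (herr h).trans hh)

end Transfer

theorem par_const_false_right {c : ℕ} (k : Fin c → Bool) : Par k (fun _ => false) = false := by
  simp [Par, xorFold]

theorem exists_mem_concatClass_comp_eq {b : ℕ} (c : ℕ) {f : (Fin b → Bool) → Bool}
    (hf : f ∈ ThresholdClass b) :
    ∃ f' ∈ ConcatClass b c, f' ∘ Prod.mk (fun _ => false) = Prod.mk false ∘ f := by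
  obtain ⟨t, rfl⟩ := hf
  let k : Fin c → Bool := fun _ => false
  exact ⟨fun p => (Par k p.1, Thr t p.2), ⟨k, t, rfl⟩,
    funext fun _ => Prod.ext (par_const_false_right k) rfl⟩

/-- from an `ε`-DP `(α,β)`-PAC learner for the concatenated class `C_{b,c}` with
sample complexity `m` one obtains an `ε`-DP `(α,β)`-PAC learner for `Threshold_b` with sample
complexity `m`. -/
theorem stmt_2 (b c m : ℕ) (ε α β : ℝ) (hε : 0 < ε)
    (hα : 0 < α) (hα1 : α < 1) (hβ : 0 < β) (hβ1 : β < 1)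
    (A : (Fin m → ((Fin c → Bool) × (Fin b → Bool)) × (Bool × Bool)) →
          PMF ((Fin c → Bool) × (Fin b → Bool) → Bool × Bool))
    (hDP : DPAlg ε A)
    (hPAC : PACLearner α β (ConcatClass b c) A) :
    ∃ B : (Fin m → (Fin b → Bool) × Bool) → PMF ((Fin b → Bool) → Bool),
      DPAlg ε B ∧ PACLearner α β (ThresholdClass b) B :=
  ⟨transferLearner A (Prod.mk fun _ => false) (Prod.mk false) Prod.snd,
    hDP.transferLearner _ _ _,
    hPAC.transferLearner (fun _ => rfl) fun _ => exists_mem_concatClass_comp_eq c⟩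
end

section
/- Let c, d, n ∈ ℕ, ε > 0, and β ∈ [0,1). Suppose A : ({0,1}^c × {0,1}^{2^d})^n → PMF(tuples ({0,1}^d → {0,1}^c)) is an ε-differentially private algorithm that solves the all-2^d-parity task with string length c and confidence 1−β, i.e., for every tuple r = (r_j)_{j∈{0,1}^d} with each r_j ∈ {0,1}^c, when the n data points are generated i.i.d. by drawing x uniformly from {0,1}^c and outputting (x, (⟨x,r_j⟩ mod 2)_{j∈{0,1}^d}), A outputs the tuple r with probability at least 1−β. Then 2^{c·2^d} · e^{−εn} · (1−β) ≤ 1; equivalently, εn ≥ c·2^d·ln 2 + ln(1−β). -/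
open scoped ENNReal

/-- The data-point distribution of the all-`2^d`-parity task with string length `c`:
draw `x` uniformly from `{0,1}^c` and output `(x, (⟨x, r_j⟩ mod 2)_{j ∈ {0,1}^d})`. -/
noncomputable def allParityDist (c d : ℕ) (r : (Fin d → Bool) → Fin c → Bool) :
    PMF ((Fin c → Bool) × ((Fin d → Bool) → Bool)) :=
  (PMF.uniformOfFintype (Fin c → Bool)).map fun x => (x, fun j => Par (r j) x)

/-!
By group privacy, replacing the whole database changes the probability of an event by a factor of
at most `e^{εm}`. The probabilities with which a mechanism hits pairwise disjoint targets on random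
databases are therefore at most `e^{εm}` times its probabilities of hitting them on one fixed
database, and the latter sum to at most one. The parity task has `2^{c·2^d}` distinct target tuples.
-/

section Packing

variable {X Y ι : Type*} {m : ℕ} {ε : ℝ} {A : (Fin m → X) → PMF Y}

theorem prOf_bind_le (P : PMF X) (K : X → PMF Y) (T : Set Y) {b : ℝ≥0∞}
    (h : ∀ x, prOf (K x) T ≤ b) : prOf (P.bind K) T ≤ b :=
  calc prOf (P.bind K) T = ∑' x, P x * prOf (K x) T := P.toOuterMeasure_bind_apply K T
    _ ≤ ∑' x, P x * b := ENNReal.tsum_le_tsum fun x => mul_le_mul_right (h x) (P x)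
    _ = b := by rw [ENNReal.tsum_mul_right, P.tsum_coe, one_mul]

theorem sum_prOf_le_one [Fintype ι] (P : PMF Y) {T : ι → Set Y}
    (hT : Pairwise (Function.onFun Disjoint T)) : ∑ i, prOf P (T i) ≤ 1 := by
  let _ : MeasurableSpace Y := ⊤
  calc ∑ i, prOf P (T i) = ∑ i, P.toMeasure (T i) := by
        simp only [prOf, P.toMeasure_apply_eq_toOuterMeasure_apply .of_discrete]
    _ ≤ P.toMeasure Set.univ :=
        MeasureTheory.sum_measure_le_measure_univ
          (fun _ _ => MeasurableSet.of_discrete.nullMeasurableSet)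
          fun _ _ _ _ hij => (hT hij).aedisjoint
    _ = 1 := MeasureTheory.measure_univ

theorem DPAlg.prOf_le_pow_card (hA : DPAlg ε A) (T : Set Y) (s : Finset (Fin m))
    {x x' : Fin m → X} (h : ∀ j ∉ s, x j = x' j) :
    prOf (A x) T ≤ ENNReal.ofReal (Real.exp ε) ^ s.card * prOf (A x') T := by
  induction s using Finset.induction_on generalizing x with
  | empty =>
    obtain rfl : x = x' := funext fun j => h j (Finset.notMem_empty j)
    simp
  | insert i s hi ih =>
    let y := Function.update x i (x' i)
    have hxy : Neighbor x y := ⟨i, fun j hj => (Function.update_of_ne hj _ _).symm⟩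
    have hy : ∀ j ∉ s, y j = x' j := by
      intro j hj
      obtain rfl | hji := eq_or_ne j i
      · exact Function.update_self ..
      · exact (Function.update_of_ne hji _ _).trans (h j (by simp [hji, hj]))
    calc prOf (A x) T ≤ ENNReal.ofReal (Real.exp ε) * prOf (A y) T := hA x y hxy T
      _ ≤ ENNReal.ofReal (Real.exp ε) *
          (ENNReal.ofReal (Real.exp ε) ^ s.card * prOf (A x') T) := by gcongr; exact ih hy
      _ = ENNReal.ofReal (Real.exp ε) ^ (insert i s).card * prOf (A x') T := by
        rw [Finset.card_insert_of_notMem hi, pow_succ', mul_assoc]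

theorem DPAlg.prOf_bind_le_pow (hA : DPAlg ε A) (D : PMF (Fin m → X)) (x₀ : Fin m → X)
    (T : Set Y) :
    prOf (D.bind A) T ≤ ENNReal.ofReal (Real.exp ε) ^ m * prOf (A x₀) T :=
  prOf_bind_le D A T fun x => by
    simpa using hA.prOf_le_pow_card T Finset.univ (x := x) (x' := x₀) (by simp)

theorem DPAlg.card_mul_le_pow [Fintype ι] (hA : DPAlg ε A) {T : ι → Set Y}
    (hT : Pairwise (Function.onFun Disjoint T)) (D : ι → PMF (Fin m → X)) {p : ℝ≥0∞}
    (hp : ∀ i, p ≤ prOf ((D i).bind A) (T i)) :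
    Fintype.card ι * p ≤ ENNReal.ofReal (Real.exp ε) ^ m := by
  rcases isEmpty_or_nonempty ι with _ | ⟨⟨i₀⟩⟩
  · simp
  obtain ⟨x₀, -⟩ := (D i₀).support_nonempty
  calc (Fintype.card ι : ℝ≥0∞) * p = ∑ _i : ι, p := by simp
    _ ≤ ∑ i, ENNReal.ofReal (Real.exp ε) ^ m * prOf (A x₀) (T i) :=
        Finset.sum_le_sum fun i _ => (hp i).trans (hA.prOf_bind_le_pow (D i) x₀ (T i))
    _ = ENNReal.ofReal (Real.exp ε) ^ m * ∑ i, prOf (A x₀) (T i) := by rw [Finset.mul_sum]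
    _ ≤ ENNReal.ofReal (Real.exp ε) ^ m := mul_le_of_le_one_right' (sum_prOf_le_one _ hT)

theorem stmt_3_general [Fintype ι] {β : ℝ} (hA : DPAlg ε A) {T : ι → Set Y}
    (hT : Pairwise (Function.onFun Disjoint T)) (D : ι → PMF (Fin m → X))
    (hCorrect : ∀ i, ENNReal.ofReal (1 - β) ≤ prOf ((D i).bind A) (T i)) :
    Fintype.card ι * Real.exp (-(ε * m)) * (1 - β) ≤ 1 := by
  have packing : Fintype.card ι * (1 - β) ≤ Real.exp (ε * m) := by
    have h := hA.card_mul_le_pow hT D hCorrect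
    rwa [← ENNReal.ofReal_natCast, ← ENNReal.ofReal_mul (Nat.cast_nonneg _),
      ← ENNReal.ofReal_pow (Real.exp_nonneg _), ENNReal.ofReal_le_ofReal_iff (by positivity),
      ← Real.exp_nat_mul, mul_comm (m : ℝ)] at h
  rwa [mul_right_comm, Real.exp_neg, ← div_eq_mul_inv, div_le_one (Real.exp_pos _)]

end Packing

/-- a packing lower bound for the all-`2^d`-parity task. If an `ε`-DP algorithm on
`n` data points outputs the whole tuple `r` with probability at least `1 − β` for every `r`,
then `2^{c·2^d} · e^{−εn} · (1 − β) ≤ 1`. -/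
theorem stmt_3 (c d n : ℕ) (ε β : ℝ) (hε : 0 < ε) (hβ0 : 0 ≤ β) (hβ1 : β < 1)
    (A : (Fin n → (Fin c → Bool) × ((Fin d → Bool) → Bool)) →
          PMF ((Fin d → Bool) → Fin c → Bool))
    (hDP : DPAlg ε A)
    (hCorrect : ∀ r : (Fin d → Bool) → Fin c → Bool,
      ENNReal.ofReal (1 - β) ≤ prOf ((iid (allParityDist c d r) n).bind A) {r}) :
    (2 : ℝ) ^ (c * 2 ^ d) * Real.exp (-(ε * n)) * (1 - β) ≤ 1 := by
  have hcard : Fintype.card ((Fin d → Bool) → Fin c → Bool) = 2 ^ (c * 2 ^ d) := by simp [pow_mul]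
  simpa only [hcard, Nat.cast_pow, Nat.cast_ofNat] using
    stmt_3_general hDP (fun _ _ h => Set.disjoint_singleton.mpr h) _ hCorrect
end
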